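/- Let X be a zero-dimensional Polish space. Then there is a compatible complete metric d_X on X with the following property: for every Polish space Y and every function f : X → Y of Baire class 1, f is first return recoverable with respect to d_X; that is, there exists a dense sequence (x_n)_{n∈ℕ} in X such that for every s ∈ X, the first return route (s_n)_{n∈ℕ} to s — defined by s_0 = x_0 and, recursively, s_{n+1} = s if s_n = s, and otherwise s_{n+1} is the first element of the sequence (x_m) lying in the open ball B(s, d_X(s, s_n)) — satisfies f(s_n) → f(s). -/

import Mathlib

open Filter Topology

/-!
A zero-dimensional Polish space `X` embeds as a closed subspace of `ℕ → ℕ`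
(`exists_isClosedEmbedding_nat_nat`), and `d_X` is the restriction of the ultrametric of
`ℕ → ℕ`. For this metric every open ball around `s` is a cylinder around `s`, so the first
return route to `s` consists of first entries of the trajectory into cylinders around `s`.

Given `f` of Baire class 1, for each `k` the space `X` is a countable union of closed sets `C k m`
on whose members `f` oscillates by less than `2 ^ (-k)` (`BaireClassOne.exists_closed_cover`).
Starting from a cylinder `A`, intersect successively with the first `C 0 m`, then the first
`C 1 m`, and so on, that keeps the set nonempty; this is `refineSet`. As the `C k m` are
closed, for a fixed `k` and small enough cylinders `A` around `s` the greedy choices are exactly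
the least `m` with `s ∈ C k m`, so that `s` itself survives the first `k` steps
(`eventually_mem_refineSet`). Hence if `p A` is chosen among the points surviving as many steps as
the length of the cylinder, `f (p A)` converges to `f s` as `A` shrinks to `s`.

The trajectory enumerates the points `p A` so that every cylinder comes before its proper
subcylinders. The first point of the trajectory in a cylinder `A` around `s` is then `p A'` for some
cylinder `A' ⊇ A` around `s` (`exists_trajectory`). Any given `p A' ≠ s` is left out of all small
cylinders, so along the route either the points equal `s` or the cylinders `A'` shrink to `s`.
-/

/-- A set is Fσ if it is a countable union of closed sets. -/
def IsFsigma {X : Type*} [TopologicalSpace X] (s : Set X) : Prop :=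
  ∃ C : ℕ → Set X, (∀ n, IsClosed (C n)) ∧ s = ⋃ n, C n

/-- A function is of Baire class 1 if preimages of open sets are Fσ. -/
def BaireClassOne {X Y : Type*} [TopologicalSpace X] [TopologicalSpace Y]
    (f : X → Y) : Prop :=
  ∀ U : Set Y, IsOpen U → IsFsigma (f ⁻¹' U)

/-- A partition of `X` into countably many clopen sets of small diameter, encoded by the
index map `c` of the pieces. -/
lemma exists_continuous_nat_dist_lt {X : Type*} [MetricSpace X] [SecondCountableTopology X]
    (hbasis : TopologicalSpace.IsTopologicalBasis {s : Set X | IsClopen s})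
    {ε : ℝ} (hε : 0 < ε) :
    ∃ c : X → ℕ, Continuous c ∧ ∀ x y, c x = c y → dist x y < ε := by
  rcases isEmpty_or_nonempty X with hX | hX
  · exact ⟨fun _ => 0, continuous_const, fun x => (hX.false x).elim⟩
  have h1 : ∀ x : X, ∃ V : Set X, IsClopen V ∧ x ∈ V ∧ V ⊆ Metric.ball x (ε / 2) := fun x =>
    hbasis.exists_subset_of_mem_open (Metric.mem_ball_self (half_pos hε)) Metric.isOpen_ball
  choose V hV hxV hVb using h1
  obtain ⟨T, hTc, hT⟩ := TopologicalSpace.isOpen_iUnion_countable V (fun x => (hV x).isOpen)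
  have hTu : ∀ x, ∃ t ∈ T, x ∈ V t := by
    intro x
    have : x ∈ ⋃ i ∈ T, V i := by rw [hT]; exact Set.mem_iUnion.2 ⟨x, hxV x⟩
    simpa using this
  have hTne : T.Nonempty := by
    obtain ⟨t, ht, _⟩ := hTu hX.some
    exact ⟨t, ht⟩
  obtain ⟨g, hg⟩ := hTc.exists_eq_range hTne
  have hcov : ∀ x, ∃ i, x ∈ V (g i) := by
    intro x
    obtain ⟨t, ht, hx⟩ := hTu x
    rw [hg] at ht
    obtain ⟨i, rfl⟩ := ht
    exact ⟨i, hx⟩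
  classical
  refine ⟨fun x => Nat.find (hcov x), ?_, ?_⟩
  · rw [continuous_discrete_rng]
    intro b
    have : (fun x => Nat.find (hcov x)) ⁻¹' {b} = V (g b) ∩ ⋂ j ∈ Set.Iio b, (V (g j))ᶜ := by
      ext x
      simp [Nat.find_eq_iff]
    rw [this]
    exact (hV _).isOpen.inter
      ((Set.finite_Iio b).isOpen_biInter fun j _ => (hV _).compl.isOpen)
  · intro x y hxy
    have hx := hVb _ (Nat.find_spec (hcov x))
    have hy := hVb _ (Nat.find_spec (hcov y))
    have hxy' : Nat.find (hcov x) = Nat.find (hcov y) := hxy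
    rw [← hxy'] at hy
    rw [Metric.mem_ball] at hx hy
    have := dist_triangle_right x y (g (Nat.find (hcov x)))
    linarith

lemma exists_isClosedEmbedding_nat_nat {X : Type*} [TopologicalSpace X] [PolishSpace X]
    (hbasis : TopologicalSpace.IsTopologicalBasis {s : Set X | IsClopen s}) :
    ∃ e : X → ℕ → ℕ, IsClosedEmbedding e := by
  let := TopologicalSpace.upgradeIsCompletelyMetrizable X
  have h := fun n : ℕ => exists_continuous_nat_dist_lt hbasis
    (show (0 : ℝ) < (1 / 2) ^ n by positivity)
  choose c hc hd using h
  set e : X → ℕ → ℕ := fun x n => c n x with he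
  have hcont : Continuous e := continuous_pi hc
  have hsmall : ∀ ε : ℝ, 0 < ε → ∃ n : ℕ, (1 / 2 : ℝ) ^ n < ε := fun ε hε =>
    exists_pow_lt_of_lt_one hε (by norm_num)
  -- A limit of points `e (x i)` makes every coordinate eventually constant, so `x` is Cauchy.
  have hclosed : IsClosedMap e := by
    intro F hF
    refine isClosed_of_closure_subset fun y hy => ?_
    obtain ⟨u, hu, hlim⟩ := mem_closure_iff_seq_limit.1 hy
    choose x hxF hx using hu
    have hev : ∀ n, ∀ᶠ i in atTop, c n (x i) = y n := by
      intro n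
      have h1 : Tendsto (fun i => u i n) atTop (𝓝 (y n)) := (tendsto_pi_nhds.1 hlim) n
      rw [nhds_discrete, tendsto_pure] at h1
      filter_upwards [h1] with i hi
      rw [← hi, ← hx i]
    have hcau : CauchySeq x := by
      rw [Metric.cauchySeq_iff]
      intro ε hε
      obtain ⟨n, hn⟩ := hsmall ε hε
      obtain ⟨N, hN⟩ := eventually_atTop.1 (hev n)
      exact ⟨N, fun a ha b hb => (hd n _ _ ((hN a ha).trans (hN b hb).symm)).trans hn⟩
    obtain ⟨z, hz⟩ := cauchySeq_tendsto_of_complete hcau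
    refine ⟨z, hF.mem_of_tendsto hz (Eventually.of_forall hxF), ?_⟩
    refine tendsto_nhds_unique ((hcont.tendsto z).comp hz) ?_
    have : e ∘ x = u := funext hx
    rwa [this]
  refine ⟨e, IsClosedEmbedding.of_continuous_injective_isClosedMap hcont ?_ hclosed⟩
  intro x y hxy
  by_contra hne
  obtain ⟨n, hn⟩ := hsmall _ (dist_pos.2 hne)
  exact lt_asymm hn (hd n x y (congrFun hxy n))

lemma BaireClassOne.exists_closed_cover {X Y : Type*} [TopologicalSpace X] [MetricSpace Y]
    [TopologicalSpace.SeparableSpace Y] [Nonempty Y] {f : X → Y} (hf : BaireClassOne f)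
    {ε : ℝ} (hε : 0 < ε) :
    ∃ C : ℕ → Set X, (∀ m, IsClosed (C m)) ∧ (∀ x, ∃ m, x ∈ C m) ∧
      ∀ m, ∀ x ∈ C m, ∀ y ∈ C m, dist (f x) (f y) < ε := by
  have h := fun i : ℕ => hf (Metric.ball (TopologicalSpace.denseSeq Y i) (ε / 2))
    Metric.isOpen_ball
  choose F hF hFe using h
  have hsub : ∀ i j, ∀ x ∈ F i j, dist (f x) (TopologicalSpace.denseSeq Y i) < ε / 2 := by
    intro i j x hx
    have : x ∈ f ⁻¹' Metric.ball (TopologicalSpace.denseSeq Y i) (ε / 2) := by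
      rw [hFe i]; exact Set.mem_iUnion.2 ⟨j, hx⟩
    exact this
  refine ⟨fun m => F m.unpair.1 m.unpair.2, fun m => hF _ _, ?_, ?_⟩
  · intro x
    obtain ⟨i, hi⟩ := (TopologicalSpace.denseRange_denseSeq Y).exists_dist_lt (f x) (half_pos hε)
    have : x ∈ f ⁻¹' Metric.ball (TopologicalSpace.denseSeq Y i) (ε / 2) := hi
    rw [hFe i] at this
    obtain ⟨j, hj⟩ := Set.mem_iUnion.1 this
    exact ⟨Nat.pair i j, by simpa using hj⟩
  · intro m x hx y hy
    have h1 := hsub _ _ x hx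
    have h2 := hsub _ _ y hy
    have := dist_triangle_right (f x) (f y) (TopologicalSpace.denseSeq Y m.unpair.1)
    linarith

/-- Greedy refinement of `A`: step `k` intersects with the first member of the sequence `C k` that
meets the set obtained so far. (If none does, the infimum has the junk value `0`; for covers
`C k` and nonempty `A` this does not occur.) -/
noncomputable def refineSet {X : Type*} (C : ℕ → ℕ → Set X) (A : Set X) : ℕ → Set X
  | 0 => A
  | k + 1 => refineSet C A k ∩ C k (sInf {m | (refineSet C A k ∩ C k m).Nonempty})

lemma refineSet_antitone {X : Type*} (C : ℕ → ℕ → Set X) (A : Set X) :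
    Antitone (refineSet C A) :=
  antitone_nat_of_succ_le fun _ => Set.inter_subset_left

lemma refineSet_nonempty {X : Type*} {C : ℕ → ℕ → Set X} (hC : ∀ k x, ∃ m, x ∈ C k m)
    {A : Set X} (hA : A.Nonempty) (k : ℕ) : (refineSet C A k).Nonempty := by
  induction k with
  | zero => exact hA
  | succ k ih =>
    obtain ⟨x, hx⟩ := ih
    obtain ⟨m, hm⟩ := hC k x
    exact Nat.sInf_mem (s := {m | (refineSet C A k ∩ C k m).Nonempty}) ⟨m, x, hx, hm⟩

/-- Once `A` is small enough to miss the closed sets `C k j` with `j` below the least index `m`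
such that `s ∈ C k m`, the greedy choice at step `k` is `m`. -/
lemma eventually_mem_refineSet {X : Type*} [TopologicalSpace X] {C : ℕ → ℕ → Set X}
    (hCc : ∀ k m, IsClosed (C k m)) (hC : ∀ k x, ∃ m, x ∈ C k m) {s : X} {A : ℕ → Set X}
    (hsA : ∀ n, s ∈ A n) (hA : ∀ U ∈ 𝓝 s, ∀ᶠ n in atTop, A n ⊆ U) (k : ℕ) :
    ∀ᶠ n in atTop, s ∈ refineSet C (A n) k := by
  induction k with
  | zero => exact Eventually.of_forall hsA
  | succ k ih =>
    classical
    set m := Nat.find (hC k s) with hm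
    have hms : s ∈ C k m := Nat.find_spec (hC k s)
    have hU : (⋂ j ∈ Set.Iio m, (C k j)ᶜ) ∈ 𝓝 s := by
      refine (biInter_mem (Set.finite_Iio m)).2 fun j hj => ?_
      exact (hCc k j).isOpen_compl.mem_nhds (Nat.find_min (hC k s) hj)
    filter_upwards [ih, hA _ hU] with n hn hnU
    have hinf : sInf {m | (refineSet C (A n) k ∩ C k m).Nonempty} = m := by
      refine le_antisymm (Nat.sInf_le ⟨s, hn, hms⟩) (le_csInf ⟨m, s, hn, hms⟩ ?_)
      rintro j ⟨x, hx, hxj⟩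
      by_contra hjm
      have hxU := hnU (refineSet_antitone C (A n) (Nat.zero_le k) hx)
      exact Set.mem_iInter₂.1 hxU j (not_le.1 hjm) hxj
    change s ∈ refineSet C (A n) k ∩ C k (sInf {m | (refineSet C (A n) k ∩ C k m).Nonempty})
    rw [hinf]
    exact ⟨hn, hms⟩

/-- The encoding of `List ℕ` numbers the list `PiNat.res a m`, which is a suffix of
`PiNat.res a n` for `m < n`, by a smaller number: cylinders are enumerated before their proper
subcylinders. -/
lemma encode_res_strictMono (a : ℕ → ℕ) :
    StrictMono fun n => Encodable.encode (PiNat.res a n) := by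
  refine strictMono_nat_of_lt_succ fun n => ?_
  rw [PiNat.res_succ, Encodable.encode_list_cons]
  exact Nat.lt_succ_of_le (Nat.right_le_pair _ _)

/-- Suppose `G n A ⊆ A` is nonempty for every nonempty `A`. Choose a point `p s n`, depending only
on the cylinder of length `n` around `s`, in `G n` of that cylinder. These points can be enumerated
as a trajectory whose first entry into any cylinder around `s` is of the form `p s n'`. -/
lemma exists_trajectory {X : Type*} [Nonempty X] (e : X → ℕ → ℕ) (G : ℕ → Set X → Set X)
    (hG0 : ∀ A, G 0 A = A) (hGA : ∀ n A, G n A ⊆ A)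
    (hG : ∀ n A, A.Nonempty → (G n A).Nonempty) :
    ∃ (xs : ℕ → X) (p : X → ℕ → X),
      (∀ s n, p s n ∈ G n {t | PiNat.res (e t) n = PiNat.res (e s) n}) ∧
      (∀ s n, ∃ k, xs k = p s n) ∧
      (∀ s, xs 0 = p s 0) ∧
      ∀ s n k, PiNat.res (e (xs k)) n = PiNat.res (e s) n →
        (∀ j < k, PiNat.res (e (xs j)) n ≠ PiNat.res (e s) n) →
        ∃ n', xs k = p s n' := by
  classical
  let x₀ : X := Classical.arbitrary X
  -- Lists with an empty cylinder get the point `x₀` of the empty list, so they add nothing.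
  have hq : ∀ σ : List ℕ, ∃ x : X, (σ = [] → x = x₀) ∧
      ((∃ t, PiNat.res (e t) σ.length = σ) →
        x ∈ G σ.length {t | PiNat.res (e t) σ.length = σ}) ∧
      ((¬ ∃ t, PiNat.res (e t) σ.length = σ) → x = x₀) := by
    intro σ
    by_cases h0 : σ = []
    · subst h0
      refine ⟨x₀, fun _ => rfl, fun _ => ?_, fun _ => rfl⟩
      simp [hG0]
    · by_cases h : ∃ t, PiNat.res (e t) σ.length = σ
      · obtain ⟨x, hx⟩ := hG σ.length {t | PiNat.res (e t) σ.length = σ} h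
        exact ⟨x, fun h' => (h0 h').elim, fun _ => hx, fun h' => (h' h).elim⟩
      · exact ⟨x₀, fun _ => rfl, fun h' => (h h').elim, fun _ => rfl⟩
  choose q hq0 hqG hqe using hq
  have hpG : ∀ s n, q (PiNat.res (e s) n) ∈
      G n {t | PiNat.res (e t) n = PiNat.res (e s) n} := by
    intro s n
    have := hqG (PiNat.res (e s) n)
    rw [PiNat.res_length] at this
    exact this ⟨s, rfl⟩
  refine ⟨fun k => q (Denumerable.ofNat (List ℕ) k), fun s n => q (PiNat.res (e s) n),
    hpG, fun s n => ⟨Encodable.encode (PiNat.res (e s) n), by simp⟩, fun s => ?_, ?_⟩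
  · simp
  · intro s n k hk hmin
    set σ := Denumerable.ofNat (List ℕ) k with hσ
    by_cases h : ∃ t, PiNat.res (e t) σ.length = σ
    · have hx : PiNat.res (e (q σ)) σ.length = σ := hGA _ _ (hqG σ h)
      have hle : k ≤ Encodable.encode (PiNat.res (e s) n) := by
        by_contra hlt
        refine hmin _ (not_le.1 hlt) ?_
        beta_reduce
        rw [Denumerable.ofNat_encode]
        exact hGA _ _ (hpG s n)
      have hkσ : k = Encodable.encode σ := by rw [hσ, Denumerable.encode_ofNat]
      have hlen : σ.length ≤ n := by
        by_contra hlt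
        have := encode_res_strictMono (e (q σ)) (not_le.1 hlt)
        simp only [hx] at this
        rw [hk] at this
        omega
      refine ⟨σ.length, ?_⟩
      have : PiNat.res (e s) σ.length = σ := by
        rw [← hx, PiNat.res_length]
        rw [PiNat.res_eq_res] at hk ⊢
        exact fun i hi => (hk (hi.trans_le hlen)).symm
      beta_reduce
      rw [this]
    · exact ⟨0, (hqe σ h).trans (hq0 [] rfl).symm⟩

/-- Every (nonempty) zero-dimensional Polish space `X` (the clopen sets form a basis)
carries a compatible complete metric `d_X` such that every Baire class 1 function
`f : X → Y` into a Polish space `Y` is first return recoverable with respect to `d_X`: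
there is a dense sequence (trajectory) `(x_n)` in `X` such that for every `s ∈ X` the
first return route `(s_n)` to `s` — given by `s_0 = x_0`; `s_{n+1} = s` if `s_n = s`; and
otherwise `s_{n+1}` is the first element of the trajectory in the open ball
`B(s, d_X(s, s_n))` — satisfies `f (s_n) → f s`. -/
theorem zeroDim_polish_baireClassOne_firstReturnRecoverable
    {X : Type*} [tX : TopologicalSpace X] [PolishSpace X] [Nonempty X]
    (hbasis : TopologicalSpace.IsTopologicalBasis {s : Set X | IsClopen s}) :
    ∃ m : MetricSpace X,
      m.toUniformSpace.toTopologicalSpace = tX ∧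
      @CompleteSpace X m.toUniformSpace ∧
      ∀ (Y : Type*) [MetricSpace Y] [CompleteSpace Y] [TopologicalSpace.SeparableSpace Y]
        (f : X → Y), BaireClassOne f →
        ∃ xs : ℕ → X, DenseRange xs ∧
          ∀ s : X, ∃ route : ℕ → X,
            route 0 = xs 0 ∧
            (∀ n : ℕ,
              (route n = s → route (n + 1) = s) ∧
              (route n ≠ s → ∃ k : ℕ, route (n + 1) = xs k ∧
                @dist X m.toDist s (xs k) < @dist X m.toDist s (route n) ∧
                ∀ j < k, ¬ @dist X m.toDist s (xs j) < @dist X m.toDist s (route n))) ∧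
            Tendsto (fun n => f (route n)) atTop (𝓝 (f s)) := by
  classical
  obtain ⟨e, he⟩ := exists_isClosedEmbedding_nat_nat hbasis
  let M : MetricSpace (ℕ → ℕ) := PiNat.metricSpaceNatNat
  let m : MetricSpace X := MetricSpace.induced e he.injective M
  have htop : m.toUniformSpace.toTopologicalSpace = tX := he.isInducing.eq_induced.symm
  have hdist : ∀ x y : X, m.dist x y = M.dist (e x) (e y) := fun _ _ => rfl
  refine ⟨m, htop, ?_, ?_⟩
  · have hui : @IsUniformInducing X (ℕ → ℕ) m.toUniformSpace M.toUniformSpace e :=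
      @IsUniformInducing.mk X (ℕ → ℕ) m.toUniformSpace M.toUniformSpace e rfl
    have hcs : @CompleteSpace (ℕ → ℕ) M.toUniformSpace := inferInstanceAs (CompleteSpace (ℕ → ℕ))
    rw [@completeSpace_iff_isComplete_range X (ℕ → ℕ) m.toUniformSpace M.toUniformSpace e hui]
    exact @IsClosed.isComplete (ℕ → ℕ) M.toUniformSpace hcs _ he.isClosed_range
  intro Y _ _ _ f hf
  have : Nonempty Y := ‹Nonempty X›.map f
  have hcov := fun k : ℕ => hf.exists_closed_cover (show (0 : ℝ) < (1 / 2) ^ k by positivity)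
  choose C hCc hC hCd using hcov
  obtain ⟨xs, p, hp, hpx, hp0, hfirst⟩ := exists_trajectory e (fun n A => refineSet C A n)
    (fun _ => rfl) (fun n A => refineSet_antitone C A (Nat.zero_le n))
    (fun n A hA => refineSet_nonempty hC hA n)
  have hpc : ∀ s n, PiNat.res (e (p s n)) n = PiNat.res (e s) n := fun s n =>
    refineSet_antitone C _ (Nat.zero_le n) (hp s n)
  have hres : ∀ {a b : ℕ → ℕ} {i j : ℕ}, i ≤ j → PiNat.res a j = PiNat.res b j →
      PiNat.res a i = PiNat.res b i := by
    intro a b i j hij h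
    rw [PiNat.res_eq_res] at h ⊢
    exact fun l hl => h (hl.trans_le hij)
  have hnhds : ∀ s, ∀ U ∈ 𝓝 s,
      ∀ᶠ n in atTop, {t | PiNat.res (e t) n = PiNat.res (e s) n} ⊆ U := by
    intro s U hU
    rw [he.isInducing.nhds_eq_comap, mem_comap] at hU
    obtain ⟨V, hV, hVU⟩ := hU
    obtain ⟨W, hWV, hW, hsW⟩ := mem_nhds_iff.1 hV
    obtain ⟨u, ⟨x, n, rfl⟩, hsu, huW⟩ :=
      (PiNat.isTopologicalBasis_cylinders (fun _ => ℕ)).exists_subset_of_mem_open hsW hW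
    filter_upwards [eventually_ge_atTop n] with n' hn' t ht
    refine hVU (hWV (huW ?_))
    rw [← PiNat.mem_cylinder_iff_eq.1 hsu, PiNat.cylinder_eq_res]
    exact hres hn' ht
  -- The open ball around `s` of radius `dist s r` is a cylinder of length `firstDiff + 1`.
  have hball : ∀ s r t : X, r ≠ s → (m.dist s t < m.dist s r ↔
      PiNat.res (e t) (PiNat.firstDiff (e s) (e r) + 1) =
        PiNat.res (e s) (PiNat.firstDiff (e s) (e r) + 1)) := by
    intro s r t hrs
    have hne : e s ≠ e r := fun h => hrs (he.injective h).symm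
    have key : PiNat.res (e t) (PiNat.firstDiff (e s) (e r) + 1) =
        PiNat.res (e s) (PiNat.firstDiff (e s) (e r) + 1) ↔
        e t ∈ PiNat.cylinder (e s) (PiNat.firstDiff (e s) (e r) + 1) := by
      rw [PiNat.cylinder_eq_res]; rfl
    rw [key, hdist, hdist]
    rw [show M.dist (e s) (e r) = (1 / 2) ^ PiNat.firstDiff (e s) (e r) from
      PiNat.dist_eq_of_ne hne]
    rw [PiNat.mem_cylinder_comm]
    by_cases hst : e s = e t
    · rw [← hst, show M.dist (e s) (e s) = 0 from PiNat.dist_self _]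
      simp
    · rw [show M.dist (e s) (e t) = (1 / 2) ^ PiNat.firstDiff (e s) (e t) from
        PiNat.dist_eq_of_ne hst]
      rw [pow_lt_pow_iff_right_of_lt_one₀ (by norm_num) (by norm_num),
        PiNat.mem_cylinder_iff_le_firstDiff hst, Nat.succ_le_iff]
  refine ⟨xs, ?_, ?_⟩
  · intro s
    rw [mem_closure_iff_nhds]
    intro U hU
    obtain ⟨n, hn⟩ := (hnhds s U hU).exists
    obtain ⟨k, hk⟩ := hpx s n
    exact ⟨xs k, hn (by rw [hk]; exact hpc s n), k, rfl⟩
  intro s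
  have hstep : ∀ r : X, ∃ r' : X, (r = s → r' = s) ∧
      (r ≠ s → ∃ k : ℕ, r' = xs k ∧ m.dist s (xs k) < m.dist s r ∧
        ∀ j < k, ¬ m.dist s (xs j) < m.dist s r) := by
    intro r
    by_cases hr : r = s
    · exact ⟨s, fun _ => rfl, fun h => (h hr).elim⟩
    · have hex : ∃ k, m.dist s (xs k) < m.dist s r := by
        obtain ⟨k, hk⟩ := hpx s (PiNat.firstDiff (e s) (e r) + 1)
        exact ⟨k, (hball s r _ hr).2 (by rw [hk]; exact hpc s _)⟩
      exact ⟨xs (Nat.find hex), fun h => (hr h).elim, fun _ =>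
        ⟨_, rfl, Nat.find_spec hex, fun j hj => Nat.find_min hex hj⟩⟩
  choose next hnext using hstep
  let route : ℕ → X := fun n => Nat.rec (xs 0) (fun _ r => next r) n
  have hr1 : ∀ n, route (n + 1) = next (route n) := fun _ => rfl
  refine ⟨route, rfl, fun n => hnext (route n), ?_⟩
  have hroute : ∀ n, route n = s ∨
      (PiNat.res (e (route n)) n = PiNat.res (e s) n ∧ ∃ n', route n = p s n') := by
    intro n
    induction n with
    | zero => exact Or.inr ⟨by simp, 0, hp0 s⟩
    | succ n ih =>
      rcases eq_or_ne (route n) s with hr | hr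
      · exact Or.inl ((hnext (route n)).1 hr)
      · replace ih := (ih.resolve_left hr).1
        obtain ⟨k, hk, hlt, hmin⟩ := (hnext (route n)).2 hr
        rw [hball s _ _ hr] at hlt
        have hmin' := fun j hj => mt (hball s _ _ hr).2 (hmin j hj)
        have hne : e s ≠ e (route n) := fun h => hr (he.injective h).symm
        have hn : n ≤ PiNat.firstDiff (e s) (e (route n)) := by
          rw [← PiNat.mem_cylinder_iff_le_firstDiff hne, PiNat.cylinder_eq_res]
          exact ih.symm
        refine Or.inr ⟨?_, ?_⟩
        · rw [hr1, hk]
          exact hres (Nat.succ_le_succ hn) hlt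
        · rw [hr1, hk]
          exact hfirst s _ k hlt hmin'
  rw [Metric.tendsto_atTop]
  intro ε hε
  obtain ⟨k, hk⟩ := exists_pow_lt_of_lt_one hε (show (1 / 2 : ℝ) < 1 by norm_num)
  have hmem := eventually_mem_refineSet hCc hC (s := s)
    (A := fun n => {t | PiNat.res (e t) n = PiNat.res (e s) n}) (fun _ => rfl) (hnhds s) (k + 1)
  obtain ⟨N, hN⟩ := eventually_atTop.1 (hmem.and (eventually_ge_atTop (k + 1)))
  have hclose : ∀ n ≥ N, dist (f (p s n)) (f s) < ε := by
    intro n hn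
    obtain ⟨h1, h2⟩ := hN n hn
    exact (hCd k _ _ (refineSet_antitone C _ h2 (hp s n)).2 _ h1.2).trans hk
  -- The finitely many `p s n'` with `n' < N` other than `s` lie outside all small cylinders.
  have hU : (⋂ n' ∈ Set.Iio N, {x | p s n' = s ∨ x ≠ p s n'}) ∈ 𝓝 s := by
    refine (biInter_mem (Set.finite_Iio N)).2 fun n' _ => ?_
    by_cases h : p s n' = s
    · simp [h]
    · filter_upwards [isOpen_ne.mem_nhds (Ne.symm h)] with x hx using Or.inr hx
  obtain ⟨M', hM'⟩ := eventually_atTop.1 (hnhds s _ hU)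
  refine ⟨M', fun n hn => ?_⟩
  rcases hroute n with h | ⟨h, n', hn'⟩
  · rw [h, dist_self]; exact hε
  · rcases lt_or_ge n' N with hlt | hge
    · have := Set.mem_iInter₂.1 (hM' n hn h) n' hlt
      rcases this with h' | h'
      · rw [hn', h', dist_self]; exact hε
      · exact (h' hn').elim
    · rw [hn']; exact hclose n' hge
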